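/- The sequence n ↦ β_{3·2ⁿ} (n ≥ 0) is strictly increasing and converges to β_c as n → ∞. -/

import Mathlib

open Filter Set

noncomputable section

namespace FatSierpinski

/-- The digit set Ω = {(0,0),(1,0),(0,1)} ⊆ ℝ². -/
def OmegaR : Set (ℝ × ℝ) := {(0, 0), (1, 0), (0, 1)}

/-- The fat Sierpinski gasket `S_β` (sequences are 0-indexed: `d i` is the digit d_{i+1}). -/
def Sfat (β : ℝ) : Set (ℝ × ℝ) :=
  {x | ∃ d : ℕ → ℝ × ℝ, (∀ i, d i ∈ OmegaR) ∧ x = ∑' i : ℕ, (β ^ (i + 1))⁻¹ • d i}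

/-- The convex hull `Δ_β` of `S_β`. -/
def Delta (β : ℝ) : Set (ℝ × ℝ) := convexHull ℝ (Sfat β)

/-- The map `f_d(x) = (x + d)/β`. -/
def fmap (β : ℝ) (d : ℝ × ℝ) (x : ℝ × ℝ) : ℝ × ℝ := β⁻¹ • (x + d)

/-- The overlap region `O_β = ⋃_{c ≠ d ∈ Ω} f_c(Δ_β) ∩ f_d(Δ_β)`. -/
def Ofat (β : ℝ) : Set (ℝ × ℝ) :=
  ⋃ c ∈ OmegaR, ⋃ d ∈ OmegaR, ⋃ (_ : c ≠ d), (fmap β c '' Delta β) ∩ (fmap β d '' Delta β)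

/-- The univoque set of codings `𝐔_β`. -/
def Ufat (β : ℝ) : Set (ℕ → ℝ × ℝ) :=
  {d | (∀ i, d i ∈ OmegaR) ∧
    ∀ n : ℕ, (∑' i : ℕ, (β ^ (i + 1))⁻¹ • d (n + i)) ∉ Ofat β}

/-- `d` has smallest period `k`. -/
def SmallestPeriod {α : Type*} (d : ℕ → α) (k : ℕ) : Prop :=
  0 < k ∧ (∀ i, d (i + k) = d i) ∧ ∀ j, 0 < j → j < k → ∃ i, d (i + j) ≠ d i

/-- The critical base `β_k`. -/
def betaK (k : ℕ) : ℝ :=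
  sInf {β : ℝ | β ∈ Set.Ioc (1 : ℝ) 2 ∧ ∃ d ∈ Ufat β, SmallestPeriod d k}

/-- Strict lexicographic order on sequences. -/
def seqLT {α : Type*} [Preorder α] (a b : ℕ → α) : Prop :=
  ∃ n, (∀ i < n, a i = b i) ∧ a n < b n

/-- Weak lexicographic order on sequences. -/
def seqLE {α : Type*} [Preorder α] (a b : ℕ → α) : Prop :=
  seqLT a b ∨ a = b

/-- `a` is a 0-1 sequence. -/
def IsBinary (a : ℕ → ℕ) : Prop := ∀ i, a i ≤ 1

/-- `a` does not end with `0^∞`. -/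
def NotEndInZeros (a : ℕ → ℕ) : Prop := ∀ N, ∃ i, N ≤ i ∧ a i ≠ 0

/-- `∑_{i=1}^∞ a_i β^{-i} = 1` (0-indexed: `a i` is a_{i+1}). -/
def SumsToOne (β : ℝ) (a : ℕ → ℕ) : Prop :=
  ∑' i : ℕ, (a i : ℝ) / β ^ (i + 1) = 1

/-- `a` is the quasi-greedy β-expansion of 1: the lexicographically largest
binary sequence not ending in `0^∞` whose value in base β is 1. -/
def IsQuasiGreedy (β : ℝ) (a : ℕ → ℕ) : Prop :=
  IsBinary a ∧ NotEndInZeros a ∧ SumsToOne β a ∧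
    ∀ b : ℕ → ℕ, IsBinary b → NotEndInZeros b → SumsToOne β b → seqLE b a

/-- `w⁺`: replace the final digit 0 of a block by 1. -/
def plusBlock (w : List ℕ) : List ℕ := w.dropLast ++ [1]

/-- `Θ` flips the outer digits of every consecutive triple
(000↦101, 001↦100, 100↦001, 101↦000). -/
def thetaBlock (w : List ℕ) : List ℕ :=
  w.mapIdx fun i x => if i % 3 = 1 then x else 1 - x

/-- `tB n` is the block `t_{n+1}`: `t_1 = 100`, `t_{n+1} = t_n⁺ Θ(t_n⁺)`. -/
def tB : ℕ → List ℕ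
  | 0 => [1, 0, 0]
  | n + 1 => plusBlock (tB n) ++ thetaBlock (plusBlock (tB n))

/-- The sequence `u w^∞` (the block `u` followed by `w` repeated forever). -/
def prefixPeriodic (u w : List ℕ) : ℕ → ℕ := fun i =>
  if i < u.length then u.getD i 0 else w.getD ((i - u.length) % w.length) 0

/-- The periodic sequence `w^∞`. -/
def periodicSeq (w : List ℕ) : ℕ → ℕ := fun i => w.getD (i % w.length) 0

/-- The componentwise limit `λ = 101001000101…` of the blocks `t_n`
(the digit `λ_{i+1}` has stabilized in `t_{i+2} = tB (i+1)`). -/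
def lamSeq : ℕ → ℕ := fun i => (tB (i + 1)).getD i 0

/-- `β_c` is the unique base in (1,2] with `∑ λ_i β^{-i} = 1`. -/
def IsBetaC (β : ℝ) : Prop := β ∈ Set.Ioc (1 : ℝ) 2 ∧ SumsToOne β lamSeq

/-- The sequence `t_{n+2}⁺ (Θ(t_{n+2}))^∞`, the quasi-greedy expansion of 1 for `β̂_n`. -/
def hatSeq (n : ℕ) : ℕ → ℕ :=
  prefixPeriodic (plusBlock (tB (n + 1))) (thetaBlock (tB (n + 1)))

/-- The Sharkovskii ordering `k ⊳ ℓ` on positive integers. -/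
def Sharkovskii (k l : ℕ) : Prop :=
  ∃ a b c d : ℕ, k = 2 ^ a * (2 * b + 1) ∧ l = 2 ^ c * (2 * d + 1) ∧ k ≠ l ∧
    ((1 ≤ b ∧ d = 0) ∨ (1 ≤ b ∧ 1 ≤ d ∧ (a < c ∨ (a = c ∧ b < d))) ∨
      (b = 0 ∧ d = 0 ∧ c < a))

/-- The digit set Ω as pairs of naturals (for combinatorial statements). -/
def OmegaD : Set (ℕ × ℕ) := {(0, 0), (1, 0), (0, 1)}

/-- The periodic extension `(d_1 … d_k)^∞` of a block. -/
def cyc (d : List (ℕ × ℕ)) : ℕ → ℕ × ℕ := fun i => d.getD (i % d.length) (0, 0)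

/-- Strict lexicographic order on lists. -/
def listLT (u v : List ℕ) : Prop := List.Lex (· < ·) u v

/-- Weak lexicographic order on lists. -/
def listLE (u v : List ℕ) : Prop := listLT u v ∨ u = v

/-- The first components `d_1¹ … d_k¹` of a block over Ω. -/
def comp1 (d : List (ℕ × ℕ)) : List ℕ := d.map Prod.fst

/-- The second components `d_1² … d_k²` of a block over Ω. -/
def comp2 (d : List (ℕ × ℕ)) : List ℕ := d.map Prod.snd

/-- The digits `(1 - d_1⁺) … (1 - d_k⁺)` where `d⁺ = d¹ + d²`. -/
def comp3 (d : List (ℕ × ℕ)) : List ℕ := d.map fun x => 1 - x.1 - x.2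

/-- Cyclic shift of a list by `j`. -/
def rot {α : Type*} (j : ℕ) (l : List α) : List α := l.drop j ++ l.take j

/-- `d` is a representation of the binary block `a`. -/
def IsRepresentation (a : List ℕ) (d : List (ℕ × ℕ)) : Prop :=
  d.length = a.length ∧ (∀ x ∈ d, x ∈ OmegaD) ∧
  SmallestPeriod (cyc d) a.length ∧
  comp1 d = a ∧ listLE (comp3 d) (comp2 d) ∧ listLE (comp2 d) a ∧
  ∀ j < a.length,
    listLE (comp1 (rot j d)) a ∧ listLE (comp2 (rot j d)) a ∧ listLE (comp3 (rot j d)) a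

/-- A binary block is admissible if it has a representation. -/
def IsAdmissible (a : List ℕ) : Prop := ∃ d, IsRepresentation a d

/-- The `i`-th consecutive triple of a block (0-indexed). -/
def tripleAt (a : List ℕ) (i : ℕ) : List ℕ :=
  [a.getD (3 * i) 0, a.getD (3 * i + 1) 0, a.getD (3 * i + 2) 0]

/-- The edges of the directed graph on {000, 001, 100, 101} defining the subshift `X`. -/
def XEdge (u v : List ℕ) : Prop :=
  (u, v) ∈ ({([1,0,1], [0,0,1]), ([1,0,1], [0,0,0]), ([0,0,1], [0,0,0]),
             ([0,0,0], [1,0,1]), ([0,0,0], [1,0,0]), ([1,0,0], [1,0,1])} :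
      Set (List ℕ × List ℕ))

/-!
Code points of the gasket by words over three letters, the letter `j` standing for the vertex
`digit j` of the triangle. A word `w` is univoque in base `β` iff, behind every letter of `w` other
than `j`, the indicator sequence of the letter `j` has value less than `1` in base `β`. If `1` is
the value of a sequence `a` whose tails are at most `a`, then, up to boundary cases, this says that
these indicator sequences are lexicographically smaller than `a`.

Take for `a` the periodic sequence `(t_{n+1})^∞`, which represents `1` in the base `blockBase n`.
Above `blockBase n` an explicit word of smallest period `3 * 2 ^ n` is univoque. Conversely, below
`blockBase (n + 1)` every univoque word is eventually `3 * 2 ^ n`-periodic. Indeed, unless the word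
has eventual period `1` or `3`, one letter ends up at every third place and the other two are
governed by a binary sequence `v`. The condition becomes that the tails of `v`, read relative to the
digit in front of them, are smaller than a Thue–Morse-like sequence. Since that sequence arises by
iterated doubling, `v` splits into pairs `01` and `10` (or has eventual period at most `2`), and the
condition descends to the sequence of pairs. Hence `betaK (3 * 2 ^ (n + 1)) = blockBase (n + 1)`.
Finally, `blockBase n` increases to `β_c`, because the blocks `t_n` converge and the value of a
sequence depends continuously on the sequence.
-/

/-! ### Lexicographic order and substitutions -/

/-- The tail `x_m x_{m+1} …` of a sequence. -/
def shift {α : Type*} (m : ℕ) (x : ℕ → α) : ℕ → α := fun i => x (m + i)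

@[simp]
lemma shift_apply {α : Type*} (m : ℕ) (x : ℕ → α) (i : ℕ) : shift m x i = x (m + i) := rfl

@[simp]
lemma shift_zero {α : Type*} (x : ℕ → α) : shift 0 x = x := by
  ext i; simp

lemma shift_shift {α : Type*} (m n : ℕ) (x : ℕ → α) : shift m (shift n x) = shift (n + m) x := by
  ext i; simp [add_assoc]

lemma toLex_lt_of_first_diff {x y : ℕ → Bool} (p : ℕ) (heq : ∀ i < p, x i = y i)
    (hx : x p = false) (hy : y p = true) : toLex x < toLex y :=
  ⟨p, heq, by simp [hx, hy]⟩

lemma exists_first_diff {x y : ℕ → Bool} (h : toLex x < toLex y) :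
    ∃ p, (∀ i < p, x i = y i) ∧ x p = false ∧ y p = true := by
  obtain ⟨p, heq, hlt⟩ := h
  exact ⟨p, heq, Bool.lt_iff.1 hlt⟩

lemma eq_false_of_toLex_lt {x y : ℕ → Bool} (h : toLex x < toLex y) {p : ℕ}
    (heq : ∀ i < p, x i = y i) (hy : y p = false) : x p = false := by
  by_contra hx
  exact h.not_gt (toLex_lt_of_first_diff p (fun i hi => (heq i hi).symm) hy (by simpa using hx))

/-- Every tail of `x` other than possibly `x` itself is lexicographically at most `a`. -/
def ProperTailsLE (x a : ℕ → Bool) : Prop := ∀ m, toLex (shift (m + 1) x) ≤ toLex a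

/-- The indicator sequence `(1 0^{p-1})^∞` of the multiples of `p`. -/
def multiplesSeq (p : ℕ) : ℕ → Bool := fun i => decide (p ∣ i)

lemma shift_multiplesSeq_le (p m : ℕ) :
    toLex (shift m (multiplesSeq p)) ≤ toLex (multiplesSeq p) := by
  by_cases hm : p ∣ m
  · refine le_of_eq (congrArg toLex (funext fun i => ?_))
    simp [multiplesSeq, (Nat.dvd_add_right hm)]
  · exact (toLex_lt_of_first_diff 0 (by simp) (by simp [multiplesSeq, hm])
      (by simp [multiplesSeq])).le

lemma multiplesSeq_two_succ (i : ℕ) : multiplesSeq 2 (i + 1) = !multiplesSeq 2 i := by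
  simp only [multiplesSeq, ← decide_not, decide_eq_decide]
  omega

/-- The substitution `x ↦ 1 x₀ x̄₀ x₁ x̄₁ …`, which produces the period doubling. -/
def doubling (x : ℕ → Bool) : ℕ → Bool
  | 0 => true
  | i + 1 => if i % 2 = 0 then x (i / 2) else !x (i / 2)

/-- The substitution `x ↦ 1 0 x₀ x̄₀ 0 x₁ x̄₁ 0 …`, which translates binary sequences into
sequences built from the triples `100`, `101`, `000`, `001`. -/
def tripling (x : ℕ → Bool) : ℕ → Bool
  | 0 => true
  | i + 1 => if i % 3 = 0 then false else if i % 3 = 1 then x (i / 3) else !x (i / 3)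

section Substitutions

variable {x y a : ℕ → Bool}

@[simp]
lemma doubling_zero (x : ℕ → Bool) : doubling x 0 = true := rfl

@[simp]
lemma doubling_odd (x : ℕ → Bool) (k : ℕ) : doubling x (2 * k + 1) = x k := by
  simp [doubling]

@[simp]
lemma doubling_even (x : ℕ → Bool) (k : ℕ) : doubling x (2 * k + 2) = !x k := by
  have hmod : (2 * k + 1) % 2 = 1 := by omega
  have hdiv : (2 * k + 1) / 2 = k := by omega
  simp [doubling, hmod, hdiv]

@[simp]
lemma tripling_zero (x : ℕ → Bool) : tripling x 0 = true := rfl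

@[simp]
lemma tripling_three_mul_add_one (x : ℕ → Bool) (k : ℕ) : tripling x (3 * k + 1) = false := by
  simp [tripling]

@[simp]
lemma tripling_three_mul_add_two (x : ℕ → Bool) (k : ℕ) : tripling x (3 * k + 2) = x k := by
  have hmod : (3 * k + 1) % 3 = 1 := by omega
  have hdiv : (3 * k + 1) / 3 = k := by omega
  simp [tripling, hmod, hdiv]

@[simp]
lemma tripling_three_mul_add_three (x : ℕ → Bool) (k : ℕ) :
    tripling x (3 * k + 3) = !x k := by
  have hmod : (3 * k + 2) % 3 = 2 := by omega
  have hdiv : (3 * k + 2) / 3 = k := by omega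
  simp [tripling, hmod, hdiv]

lemma eq_zero_or_odd_or_even (i : ℕ) : i = 0 ∨ ∃ k, i = 2 * k + 1 ∨ i = 2 * k + 2 := by
  by_cases hi : i = 0
  · exact .inl hi
  · exact .inr ⟨(i - 1) / 2, by omega⟩

lemma eq_zero_or_three_mul_add (i : ℕ) :
    i = 0 ∨ ∃ k, i = 3 * k + 1 ∨ i = 3 * k + 2 ∨ i = 3 * k + 3 := by
  by_cases hi : i = 0
  · exact .inl hi
  · exact .inr ⟨(i - 1) / 3, by omega⟩

lemma eq_doubling (h0 : y 0 = true) (hodd : ∀ k, y (2 * k + 1) = x k)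
    (heven : ∀ k, y (2 * k + 2) = !x k) : y = doubling x := by
  ext i
  obtain rfl | ⟨k, rfl | rfl⟩ := eq_zero_or_odd_or_even i <;> simp [*]

lemma eq_tripling (h0 : y 0 = true) (h1 : ∀ k, y (3 * k + 1) = false)
    (h2 : ∀ k, y (3 * k + 2) = x k) (h3 : ∀ k, y (3 * k + 3) = !x k) : y = tripling x := by
  ext i
  obtain rfl | ⟨k, rfl | rfl | rfl⟩ := eq_zero_or_three_mul_add i <;> simp [*]

lemma doubling_congr {p : ℕ} (h : ∀ i < p, x i = y i) :
    ∀ i < 2 * p + 1, doubling x i = doubling y i := by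
  intro i hi
  obtain rfl | ⟨k, rfl | rfl⟩ := eq_zero_or_odd_or_even i
  · simp
  · simp [h k (by omega)]
  · simp [h k (by omega)]

lemma tripling_congr {p : ℕ} (h : ∀ i < p, x i = y i) :
    ∀ i < 3 * p + 2, tripling x i = tripling y i := by
  intro i hi
  obtain rfl | ⟨k, rfl | rfl | rfl⟩ := eq_zero_or_three_mul_add i
  · simp
  · simp
  · simp [h k (by omega)]
  · simp [h k (by omega)]

lemma doubling_strictMono :
    StrictMono fun x : Lex (ℕ → Bool) => toLex (doubling (ofLex x)) := by
  intro x y h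
  obtain ⟨p, heq, hx, hy⟩ := exists_first_diff h
  exact toLex_lt_of_first_diff (2 * p + 1) (doubling_congr heq) (by simpa) (by simpa)

lemma tripling_strictMono :
    StrictMono fun x : Lex (ℕ → Bool) => toLex (tripling (ofLex x)) := by
  intro x y h
  obtain ⟨p, heq, hx, hy⟩ := exists_first_diff h
  exact toLex_lt_of_first_diff (3 * p + 2) (tripling_congr heq) (by simpa) (by simpa)

lemma shift_doubling {m : ℕ} (hx : x m = false) :
    shift (2 * m + 2) (doubling x) = doubling (shift (m + 1) x) := by
  refine eq_doubling (by simp [hx]) (fun k => ?_) fun k => ?_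
  · rw [shift_apply, show 2 * m + 2 + (2 * k + 1) = 2 * (m + 1 + k) + 1 by ring, doubling_odd,
      shift_apply]
  · rw [shift_apply, show 2 * m + 2 + (2 * k + 2) = 2 * (m + 1 + k) + 2 by ring, doubling_even,
      shift_apply]

lemma shift_tripling {m : ℕ} (hx : x m = false) :
    shift (3 * m + 3) (tripling x) = tripling (shift (m + 1) x) := by
  refine eq_tripling (by simp [hx]) (fun k => ?_) (fun k => ?_) fun k => ?_
  · rw [shift_apply, show 3 * m + 3 + (3 * k + 1) = 3 * (m + 1 + k) + 1 by ring,
      tripling_three_mul_add_one]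
  · rw [shift_apply, show 3 * m + 3 + (3 * k + 2) = 3 * (m + 1 + k) + 2 by ring,
      tripling_three_mul_add_two, shift_apply]
  · rw [shift_apply, show 3 * m + 3 + (3 * k + 3) = 3 * (m + 1 + k) + 3 by ring,
      tripling_three_mul_add_three, shift_apply]

lemma shift_doubling_compl (x : ℕ → Bool) (m : ℕ) :
    shift (m + 1) (doubling xᶜ) = (shift (m + 1) (doubling x))ᶜ := by
  ext i
  have hpos : m + 1 + i ≠ 0 := by omega
  obtain h | ⟨k, h | h⟩ := eq_zero_or_odd_or_even (m + 1 + i)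
  · exact absurd h hpos
  · simp [h]
  · simp [h]

lemma properTailsLE_doubling (ha : a 0 = true) (h : ProperTailsLE x a) :
    ProperTailsLE (doubling x) (doubling a) := by
  intro m
  obtain h0 | h1 := Bool.eq_false_or_eq_true (shift (m + 1) (doubling x) 0) |>.symm
  · exact (toLex_lt_of_first_diff 0 (by simp) h0 rfl).le
  obtain hm | ⟨k, hm | hm⟩ := eq_zero_or_odd_or_even (m + 1)
  · omega
  · rw [hm, shift_apply, add_zero, doubling_odd] at h1
    refine (toLex_lt_of_first_diff 1 (fun i hi => ?_) ?_ ?_).le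
    · simp [Nat.lt_one_iff.1 hi, hm, h1]
    · simp [hm, h1]
    · exact ha
  · rw [hm, shift_apply, add_zero, doubling_even, Bool.not_eq_true'] at h1
    rw [hm, shift_doubling h1]
    exact doubling_strictMono.monotone (h k)

lemma properTailsLE_tripling (ha : a 0 = true) (h : ProperTailsLE x a) :
    ProperTailsLE (tripling x) (tripling a) := by
  intro m
  obtain h0 | h1 := Bool.eq_false_or_eq_true (shift (m + 1) (tripling x) 0) |>.symm
  · exact (toLex_lt_of_first_diff 0 (by simp) h0 rfl).le
  obtain hm | ⟨k, hm | hm | hm⟩ := eq_zero_or_three_mul_add (m + 1)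
  · omega
  · simp [hm] at h1
  · rw [hm, shift_apply, add_zero, tripling_three_mul_add_two] at h1
    refine (toLex_lt_of_first_diff 2 (fun i hi => ?_) ?_ ?_).le
    · interval_cases i
      · simp [hm, h1]
      · rw [shift_apply, hm, tripling_three_mul_add_three x k, h1]
        rfl
    · rw [hm, shift_apply, show 3 * k + 2 + 2 = 3 * (k + 1) + 1 by ring,
        tripling_three_mul_add_one]
    · exact ha
  · rw [hm, shift_apply, add_zero, tripling_three_mul_add_three, Bool.not_eq_true'] at h1
    rw [hm, shift_tripling h1]
    exact tripling_strictMono.monotone (h k)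

lemma doubling_two_mul_sub_one (x : ℕ → Bool) {p : ℕ} (hp : 0 < p) :
    doubling x (2 * p - 1) = x (p - 1) := by
  rw [show 2 * p - 1 = 2 * (p - 1) + 1 by omega, doubling_odd]

lemma tripling_three_mul_sub_one (x : ℕ → Bool) {p : ℕ} (hp : 0 < p) :
    tripling x (3 * p - 1) = x (p - 1) := by
  rw [show 3 * p - 1 = 3 * (p - 1) + 2 by omega, tripling_three_mul_add_two]

lemma doubling_add_of_antiperiodic {p : ℕ} (hp : 0 < p) (hx : ∀ i, x (i + p) = !x i)
    (hlast : x (p - 1) = true) (i : ℕ) : doubling x (i + 2 * p) = !doubling x i := by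
  obtain rfl | ⟨k, rfl | rfl⟩ := eq_zero_or_odd_or_even i
  · rw [show 0 + 2 * p = 2 * (p - 1) + 2 by omega, doubling_even, hlast, doubling_zero]
  · rw [show 2 * k + 1 + 2 * p = 2 * (k + p) + 1 by ring, doubling_odd, doubling_odd, hx]
  · rw [show 2 * k + 2 + 2 * p = 2 * (k + p) + 2 by ring, doubling_even, doubling_even, hx]

lemma tripling_add_of_antiperiodic {p : ℕ} (hp : 0 < p) (hx : ∀ i, x (i + p) = !x i)
    (hlast : x (p - 1) = true) (i : ℕ) :
    tripling x (i + 3 * p) = if i % 3 = 1 then tripling x i else !tripling x i := by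
  obtain rfl | ⟨k, rfl | rfl | rfl⟩ := eq_zero_or_three_mul_add i
  · rw [show 0 + 3 * p = 3 * (p - 1) + 3 by omega, tripling_three_mul_add_three, hlast]
    rfl
  · simp [show 3 * k + 1 + 3 * p = 3 * (k + p) + 1 by ring]
  · simp [show 3 * k + 2 + 3 * p = 3 * (k + p) + 2 by ring, hx]
  · simp [show 3 * k + 3 + 3 * p = 3 * (k + p) + 3 by ring, hx]

end Substitutions

/-- The sequences `0^∞`, `(10)^∞`, `(1100)^∞`, … obtained from `0^∞` by iterated doubling. They
converge to a shift of the Thue–Morse sequence. -/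
def morseSeq : ℕ → ℕ → Bool
  | 0 => fun _ => false
  | n + 1 => doubling (morseSeq n)

/-- The periodic sequence `(t_{n+1})^∞`, where `t_{n+1}` is the block `tB n`. -/
def blockSeq (n : ℕ) : ℕ → Bool := tripling (morseSeq n)

lemma morseSeq_one : morseSeq 1 = multiplesSeq 2 :=
  (eq_doubling (by simp [multiplesSeq]) (by grind [multiplesSeq, morseSeq])
    (by grind [multiplesSeq, morseSeq])).symm

lemma blockSeq_zero : blockSeq 0 = multiplesSeq 3 :=
  (eq_tripling (by simp [multiplesSeq]) (by grind [multiplesSeq])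
    (by grind [multiplesSeq, morseSeq]) (by grind [multiplesSeq, morseSeq])).symm

lemma morseSeq_strictMono : StrictMono fun n => toLex (morseSeq n) := by
  refine strictMono_nat_of_lt_succ fun n => ?_
  induction n with
  | zero => exact toLex_lt_of_first_diff 0 (by simp) rfl rfl
  | succ n ih => exact doubling_strictMono ih

lemma blockSeq_strictMono : StrictMono fun n => toLex (blockSeq n) :=
  tripling_strictMono.comp morseSeq_strictMono

lemma properTailsLE_morseSeq_succ (n : ℕ) :
    ProperTailsLE (morseSeq (n + 1)) (morseSeq (n + 1)) := by
  induction n with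
  | zero => rw [morseSeq_one]; exact fun m => shift_multiplesSeq_le 2 (m + 1)
  | succ n ih => exact properTailsLE_doubling rfl ih

lemma properTailsLE_compl_morseSeq_succ (n : ℕ) :
    ProperTailsLE (morseSeq (n + 1))ᶜ (morseSeq (n + 1)) := by
  induction n with
  | zero =>
    intro m
    have hcompl : (morseSeq 1)ᶜ = shift 1 (morseSeq 1) := by
      ext i
      rw [morseSeq_one, Pi.compl_apply, shift_apply, add_comm, multiplesSeq_two_succ]
      rfl
    rw [hcompl, shift_shift, morseSeq_one]
    exact shift_multiplesSeq_le 2 _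
  | succ n ih =>
    intro m
    have hcompl : shift (m + 1) (morseSeq (n + 2))ᶜ =
        shift (m + 1) (doubling (morseSeq (n + 1))ᶜ) := (shift_doubling_compl _ m).symm
    rw [hcompl]
    exact properTailsLE_doubling rfl ih m

lemma properTailsLE_blockSeq (n : ℕ) : ProperTailsLE (blockSeq n) (blockSeq n) := by
  cases n with
  | zero => rw [blockSeq_zero]; exact fun m => shift_multiplesSeq_le 3 (m + 1)
  | succ n => exact properTailsLE_tripling rfl (properTailsLE_morseSeq_succ n)

lemma morseSeq_succ_two_pow_sub_one (n : ℕ) : morseSeq (n + 1) (2 ^ n - 1) = true := by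
  induction n with
  | zero => rfl
  | succ n ih => rwa [pow_succ', morseSeq, doubling_two_mul_sub_one _ (by positivity)]

lemma morseSeq_succ_add (n i : ℕ) : morseSeq (n + 1) (i + 2 ^ n) = !morseSeq (n + 1) i := by
  induction n generalizing i with
  | zero => rw [morseSeq_one, pow_zero, multiplesSeq_two_succ]
  | succ n ih =>
    rw [pow_succ', morseSeq]
    exact doubling_add_of_antiperiodic (by positivity) ih (morseSeq_succ_two_pow_sub_one n) i

lemma morseSeq_succ_apply_of_lt (n : ℕ) :
    ∀ i < 2 ^ n - 1, morseSeq (n + 1) i = morseSeq n i := by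
  induction n with
  | zero => simp
  | succ n ih => exact fun i hi => doubling_congr ih i (by omega)

lemma blockSeq_succ_last (n : ℕ) : blockSeq (n + 1) (3 * 2 ^ n - 1) = true := by
  rw [blockSeq, tripling_three_mul_sub_one _ (by positivity), morseSeq_succ_two_pow_sub_one]

lemma blockSeq_succ_add (n i : ℕ) : blockSeq (n + 1) (i + 3 * 2 ^ n) =
    if i % 3 = 1 then blockSeq (n + 1) i else !blockSeq (n + 1) i :=
  tripling_add_of_antiperiodic (by positivity) (morseSeq_succ_add n)
    (morseSeq_succ_two_pow_sub_one n) i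

lemma blockSeq_succ_apply_of_lt (n : ℕ) :
    ∀ i < 3 * 2 ^ n - 1, blockSeq (n + 1) i = blockSeq n i :=
  fun i hi => tripling_congr (morseSeq_succ_apply_of_lt n) i (by omega)

/-- The indicator sequence of the occurrences of the letter `j` in the word `w`. -/
def letterSeq (w : ℕ → Fin 3) (j : Fin 3) : ℕ → Bool := fun i => decide (w i = j)

lemma shift_letterSeq (m : ℕ) (w : ℕ → Fin 3) (j : Fin 3) :
    shift m (letterSeq w j) = letterSeq (shift m w) j := rfl

/-- The word of period `3 * 2 ^ n` whose letter `0` occurs according to `blockSeq n` and whose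
letter `1` occupies the middle of every triple. It codes a univoque point as soon as the base
exceeds the one in which `blockSeq n` represents `1`. -/
def univoqueWord (n i : ℕ) : Fin 3 :=
  if blockSeq n i then 0 else if i % 3 = 1 then 1 else 2

lemma blockSeq_of_mod_three_eq_one (n : ℕ) {i : ℕ} (hi : i % 3 = 1) : blockSeq n i = false := by
  rw [show i = 3 * (i / 3) + 1 by omega, blockSeq, tripling_three_mul_add_one]

lemma letterSeq_univoqueWord_zero (n : ℕ) : letterSeq (univoqueWord n) 0 = blockSeq n := by
  ext i
  simp only [letterSeq, univoqueWord]
  split_ifs <;> simp_all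

lemma univoqueWord_eq_one_iff {n i : ℕ} : univoqueWord n i = 1 ↔ i % 3 = 1 := by
  by_cases hi : i % 3 = 1
  · simp [univoqueWord, hi, blockSeq_of_mod_three_eq_one n hi]
  · simp only [univoqueWord, hi, if_false, iff_false]
    split_ifs <;> decide

lemma letterSeq_univoqueWord_one (n : ℕ) :
    letterSeq (univoqueWord n) 1 = shift 2 (multiplesSeq 3) := by
  ext i
  simp only [letterSeq, univoqueWord_eq_one_iff, shift_apply, multiplesSeq,
    decide_eq_decide]
  omega

lemma shift_letterSeq_univoqueWord_two (n m : ℕ) :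
    shift (m + 1) (letterSeq (univoqueWord n) 2) = shift (m + 1) (tripling (morseSeq n)ᶜ) := by
  ext i
  obtain h | ⟨k, h | h | h⟩ := eq_zero_or_three_mul_add (m + 1 + i)
  · omega
  all_goals
    cases hk : morseSeq n k <;>
      simp [letterSeq, univoqueWord, blockSeq, h, hk]

lemma letterSeq_univoqueWord_zero_two :
    letterSeq (univoqueWord 0) 2 = shift 1 (multiplesSeq 3) := by
  ext i
  simp only [letterSeq, univoqueWord, blockSeq_zero, multiplesSeq, shift_apply]
  split_ifs <;> grind

theorem properTailsLE_letterSeq_univoqueWord (n : ℕ) (j : Fin 3) :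
    ProperTailsLE (letterSeq (univoqueWord n) j) (blockSeq n) := by
  intro m
  fin_cases j
  · simpa [letterSeq_univoqueWord_zero] using properTailsLE_blockSeq n m
  · have hmono : toLex (blockSeq 0) ≤ toLex (blockSeq n) :=
      blockSeq_strictMono.monotone (Nat.zero_le n)
    rw [blockSeq_zero] at hmono
    refine le_trans ?_ hmono
    simpa [letterSeq_univoqueWord_one, shift_shift] using shift_multiplesSeq_le 3 _
  · cases n with
    | zero =>
      simpa [letterSeq_univoqueWord_zero_two, shift_shift, blockSeq_zero]
        using shift_multiplesSeq_le 3 _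
    | succ n =>
      simpa [shift_letterSeq_univoqueWord_two] using!
        properTailsLE_tripling rfl (properTailsLE_compl_morseSeq_succ n) m

lemma shift_one_iterate {α : Type*} (r : ℕ) : (shift 1 : (ℕ → α) → ℕ → α)^[r] = shift r := by
  induction r with
  | zero => ext x; simp
  | succ r ih => ext1 x; rw [Function.iterate_succ_apply', ih, shift_shift]

lemma isPeriodicPt_shift_iff {α : Type*} {x : ℕ → α} {r : ℕ} :
    Function.IsPeriodicPt (shift 1) r x ↔ ∀ i, x (i + r) = x i := by
  simp only [Function.IsPeriodicPt, Function.IsFixedPt, shift_one_iterate, funext_iff,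
    shift_apply, add_comm]

theorem minimalPeriod_morseSeq (n : ℕ) :
    Function.minimalPeriod (shift 1) (morseSeq n) = 2 ^ n := by
  cases n with
  | zero => exact Function.minimalPeriod_eq_one_iff_isFixedPt.2 rfl
  | succ n =>
    refine Function.minimalPeriod_eq_prime_pow ?_ ?_
    · rw [isPeriodicPt_shift_iff]
      intro h
      exact (Bool.eq_not_self _).1 ((h 0).symm.trans (morseSeq_succ_add n 0))
    · rw [isPeriodicPt_shift_iff]
      intro i
      rw [show i + 2 ^ (n + 1) = i + 2 ^ n + 2 ^ n by ring]
      simp only [morseSeq_succ_add, Bool.not_not]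

lemma blockSeq_add_period (n i : ℕ) : blockSeq n (i + 3 * 2 ^ n) = blockSeq n i := by
  cases n with
  | zero => simp [blockSeq_zero, multiplesSeq]
  | succ n =>
    have hmod : (i + 3 * 2 ^ n) % 3 = i % 3 := by omega
    rw [show i + 3 * 2 ^ (n + 1) = i + 3 * 2 ^ n + 3 * 2 ^ n by ring]
    simp only [blockSeq_succ_add, hmod]
    split_ifs <;> simp

lemma dvd_of_univoqueWord_periodic {n p : ℕ}
    (hper : ∀ i, univoqueWord n (i + p) = univoqueWord n i) : 3 * 2 ^ n ∣ p := by
  have hmod : (1 + p) % 3 = 1 := by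
    rw [← univoqueWord_eq_one_iff (n := n), hper, univoqueWord_eq_one_iff]
  obtain ⟨r, rfl⟩ : 3 ∣ p := by omega
  have hblock (i : ℕ) : blockSeq n (i + 3 * r) = blockSeq n i := by
    rw [← letterSeq_univoqueWord_zero, letterSeq, letterSeq, hper]
  have hmorse (k : ℕ) : morseSeq n (k + r) = morseSeq n k := by
    have h := hblock (3 * k + 2)
    rwa [show 3 * k + 2 + 3 * r = 3 * (k + r) + 2 by ring, blockSeq, tripling_three_mul_add_two,
      tripling_three_mul_add_two] at h
  rw [← minimalPeriod_morseSeq n]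
  exact mul_dvd_mul_left 3 (isPeriodicPt_shift_iff.2 hmorse).minimalPeriod_dvd

theorem smallestPeriod_univoqueWord (n : ℕ) :
    SmallestPeriod (univoqueWord n) (3 * 2 ^ n) := by
  refine ⟨by positivity, fun i => ?_, fun j hj hlt => ?_⟩
  · simp only [univoqueWord, blockSeq_add_period, show (i + 3 * 2 ^ n) % 3 = i % 3 by omega]
  · by_contra! hper
    exact (Nat.le_of_dvd hj (dvd_of_univoqueWord_periodic hper)).not_gt hlt

/-! ### Expansions in real bases -/

/-- The value `∑ xᵢ β^{-i}` of a binary sequence in base `β`. -/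
def value (β : ℝ) (x : ℕ → Bool) : ℝ := ∑' i, ((x i).toNat : ℝ) / β ^ (i + 1)

section Value

variable {β b c : ℝ} {x y a : ℕ → Bool}

lemma hasSum_inv_pow_succ (hβ : 1 < β) : HasSum (fun i : ℕ => 1 / β ^ (i + 1)) (1 / (β - 1)) := by
  have h := (hasSum_geometric_of_lt_one (by positivity) (inv_lt_one_of_one_lt₀ hβ)).mul_left β⁻¹
  have hne : β - 1 ≠ 0 := (sub_pos.2 hβ).ne'
  have hterm : (fun i : ℕ => 1 / β ^ (i + 1)) = fun i => β⁻¹ * β⁻¹ ^ i := by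
    ext i; rw [one_div, pow_succ', mul_inv, inv_pow]
  have hsum : 1 / (β - 1) = β⁻¹ * (1 - β⁻¹)⁻¹ := by field_simp
  rwa [hterm, hsum]

lemma toNat_div_pow_nonneg (hβ : 1 < β) (x : ℕ → Bool) (i : ℕ) :
    0 ≤ ((x i).toNat : ℝ) / β ^ (i + 1) := by
  positivity

lemma toNat_div_pow_le (hβ : 1 < β) (x : ℕ → Bool) (i : ℕ) :
    ((x i).toNat : ℝ) / β ^ (i + 1) ≤ 1 / β ^ (i + 1) := by
  gcongr
  exact_mod_cast (x i).toNat_le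

lemma summable_value (hβ : 1 < β) (x : ℕ → Bool) :
    Summable fun i => ((x i).toNat : ℝ) / β ^ (i + 1) :=
  .of_nonneg_of_le (toNat_div_pow_nonneg hβ x) (toNat_div_pow_le hβ x)
    (hasSum_inv_pow_succ hβ).summable

lemma hasSum_value (hβ : 1 < β) (x : ℕ → Bool) :
    HasSum (fun i => ((x i).toNat : ℝ) / β ^ (i + 1)) (value β x) :=
  (summable_value hβ x).hasSum

lemma value_nonneg (hβ : 1 < β) (x : ℕ → Bool) : 0 ≤ value β x :=
  tsum_nonneg (toNat_div_pow_nonneg hβ x)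

lemma value_pos (hβ : 1 < β) {i : ℕ} (hi : x i = true) : 0 < value β x :=
  (summable_value hβ x).tsum_pos (toNat_div_pow_nonneg hβ x) i <| by
    simp only [hi, Bool.toNat_true, Nat.cast_one]
    positivity

lemma value_le (hβ : 1 < β) (x : ℕ → Bool) : value β x ≤ 1 / (β - 1) :=
  hasSum_le (toNat_div_pow_le hβ x) (hasSum_value hβ x) (hasSum_inv_pow_succ hβ)

lemma hasSum_mul_value (hβ : 1 < β) (x : ℕ → Bool) :
    HasSum (fun i => ((x i).toNat : ℝ) / β ^ i) (β * value β x) := by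
  have hterm : (fun i => ((x i).toNat : ℝ) / β ^ i) =
      fun i => β * (((x i).toNat : ℝ) / β ^ (i + 1)) := by
    ext i; field_simp; ring
  rw [hterm]
  exact (hasSum_value hβ x).mul_left β

lemma mul_value (hβ : 1 < β) (x : ℕ → Bool) :
    β * value β x = (x 0).toNat + value β (shift 1 x) := by
  rw [← (hasSum_mul_value hβ x).tsum_eq, (hasSum_mul_value hβ x).summable.tsum_eq_zero_add, value]
  simp [add_comm 1]

lemma pow_mul_value_sub_value (hβ : 1 < β) {p : ℕ} (heq : ∀ i < p, x i = y i)
    (hx : x p = false) (hy : y p = true) :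
    β ^ (p + 1) * (value β y - value β x) =
      1 + value β (shift (p + 1) y) - value β (shift (p + 1) x) := by
  induction p generalizing x y with
  | zero =>
    have hvx := mul_value hβ x
    have hvy := mul_value hβ y
    rw [hx, Bool.toNat_false, Nat.cast_zero] at hvx
    rw [hy, Bool.toNat_true, Nat.cast_one] at hvy
    linear_combination hvy - hvx
  | succ p ih =>
    have htail := ih (x := shift 1 x) (y := shift 1 y)
      (fun i hi => by simpa [add_comm 1] using heq (i + 1) (by omega))
      (by rwa [shift_apply, add_comm]) (by rwa [shift_apply, add_comm])
    rw [shift_shift, shift_shift, add_comm 1 (p + 1)] at htail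
    have hhead : ((x 0).toNat : ℝ) = (y 0).toNat := by rw [heq 0 (by omega)]
    linear_combination htail + β ^ (p + 1) * (mul_value hβ y - mul_value hβ x - hhead)

/-- One half of Parry's lexicographic criterion: the largest value `s` of a tail would satisfy
`s ≤ 1 + (s - 1) / β` if it exceeded `1`. -/
theorem value_le_one (hβ : 1 < β) (ha : value β a = 1) (hx : ∀ m, toLex (shift m x) ≤ toLex a) :
    value β x ≤ 1 := by
  set s := ⨆ m, value β (shift m x)
  have hbdd : BddAbove (range fun m => value β (shift m x)) :=
    ⟨1 / (β - 1), forall_mem_range.2 fun m => value_le hβ _⟩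
  have hle (m : ℕ) : value β (shift m x) ≤ s := le_ciSup hbdd m
  suffices hs : s ≤ 1 by simpa using (hle 0).trans hs
  by_contra! hs
  have hstep (m : ℕ) : value β (shift m x) ≤ 1 + (s - 1) / β := by
    have hnonneg : 0 ≤ (s - 1) / β := by bound
    obtain heq | hlt := (hx m).eq_or_lt
    · rw [toLex_inj.1 heq, ha]
      linarith
    · obtain ⟨p, heq, hp, hp'⟩ := exists_first_diff hlt
      have hdiff := pow_mul_value_sub_value hβ heq hp hp'
      rw [ha, shift_shift] at hdiff
      have hpow : β ≤ β ^ (p + 1) := le_self_pow₀ hβ.le (by omega)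
      have hgap : -(s - 1) ≤ β ^ (p + 1) * (1 - value β (shift m x)) := by
        linarith [value_nonneg hβ (shift (p + 1) a), hle (m + (p + 1))]
      have : value β (shift m x) - 1 ≤ (s - 1) / β ^ (p + 1) := by
        rw [le_div_iff₀ (by positivity)]
        linarith
      have : (s - 1) / β ^ (p + 1) ≤ (s - 1) / β := by bound
      linarith
  have hcontract : s ≤ 1 + (s - 1) / β := ciSup_le hstep
  have : (s - 1) / β < s - 1 := div_lt_self (by linarith) hβ
  linarith

lemma value_shift_succ_le_one (hβ : 1 < β) (ha : value β a = 1) (hx : ProperTailsLE x a) (m : ℕ) :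
    value β (shift (m + 1) x) ≤ 1 := by
  refine value_le_one hβ ha fun k => ?_
  rw [shift_shift, show m + 1 + k = m + k + 1 by ring]
  exact hx (m + k)

lemma one_le_value (hβ : 1 < β) (ha : value β a = 1) (htails : ProperTailsLE a a)
    (hle : toLex a ≤ toLex x) : 1 ≤ value β x := by
  obtain heq | hlt := hle.eq_or_lt
  · rw [← toLex_inj.1 heq, ha]
  · obtain ⟨p, heq, hp, hp'⟩ := exists_first_diff hlt
    have hdiff := pow_mul_value_sub_value hβ heq hp hp'
    have hgap : 0 ≤ β ^ (p + 1) * (value β x - value β a) := by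
      linarith [value_nonneg hβ (shift (p + 1) x), value_shift_succ_le_one hβ ha htails p]
    linarith [nonneg_of_mul_nonneg_right hgap (by positivity : (0 : ℝ) < β ^ (p + 1))]

lemma value_lt_one (hβ : 1 < β) (ha : value β a = 1) (hpos : ∀ m, 0 < value β (shift m a))
    (hx : ProperTailsLE x a) (hlt : toLex x < toLex a) : value β x < 1 := by
  obtain ⟨p, heq, hp, hp'⟩ := exists_first_diff hlt
  have hdiff := pow_mul_value_sub_value hβ heq hp hp'
  have hgap : 0 < β ^ (p + 1) * (value β a - value β x) := by
    linarith [hpos (p + 1), value_shift_succ_le_one hβ ha hx p]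
  linarith [pos_of_mul_pos_right hgap (by positivity)]

lemma mul_value_le_mul_value (hb : 1 < b) (hbc : b ≤ c) (x : ℕ → Bool) :
    c * value c x ≤ b * value b x :=
  hasSum_le (fun i => by gcongr) (hasSum_mul_value (hb.trans_le hbc) x) (hasSum_mul_value hb x)

lemma value_anti (hb : 1 < b) (hbc : b ≤ c) (x : ℕ → Bool) : value c x ≤ value b x :=
  hasSum_le (fun i => by gcongr) (hasSum_value (hb.trans_le hbc) x) (hasSum_value hb x)

lemma value_lt_one_of_lt (hb : 1 < b) (hbc : b < c) (hx : value b x ≤ 1) : value c x < 1 := by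
  nlinarith [mul_value_le_mul_value hb hbc.le x]

lemma continuousOn_value (hb : 1 < b) (x : ℕ → Bool) :
    ContinuousOn (fun β => value β x) (Ici b) := by
  refine continuousOn_tsum (u := fun i => 1 / b ^ (i + 1)) (fun i β hβ => ?_)
    (hasSum_inv_pow_succ hb).summable fun i β hβ => ?_
  · have : β ^ (i + 1) ≠ 0 := by have := hb.trans_le hβ; positivity
    fun_prop (disch := assumption)
  · have hβ1 : 1 < β := hb.trans_le hβ
    rw [Real.norm_of_nonneg (toNat_div_pow_nonneg hβ1 x i)]
    refine (toNat_div_pow_le hβ1 x i).trans ?_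
    have : b ≤ β := hβ
    gcongr

lemma continuous_value (hβ : 1 < β) : Continuous (value β) := by
  refine continuous_tsum (fun i => ?_) (hasSum_inv_pow_succ hβ).summable fun i x => ?_
  · have : Continuous fun d : Bool => (d.toNat : ℝ) / β ^ (i + 1) := continuous_of_discreteTopology
    exact this.comp (continuous_apply i)
  · rw [Real.norm_of_nonneg (toNat_div_pow_nonneg hβ x i)]
    exact toNat_div_pow_le hβ x i

theorem tendsto_base_of_value_eq_one {γ : ℕ → ℝ} {xs : ℕ → ℕ → Bool} (hγ : ∀ n, 1 < γ n)
    (hβ : 1 < β) (hxs : Tendsto xs atTop (nhds x)) (hvalue : ∀ n, value (γ n) (xs n) = 1)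
    (hx : value β x = 1) : Tendsto γ atTop (nhds β) := by
  have hlim {c : ℝ} (hc : 1 < c) : Tendsto (fun n => value c (xs n)) atTop (nhds (value c x)) :=
    (continuous_value hc).continuousAt.tendsto.comp hxs
  refine tendsto_order.2 ⟨fun c hc => ?_, fun c hc => ?_⟩
  · obtain ⟨d, hd, hdβ⟩ := exists_between (max_lt hc hβ)
    obtain ⟨hcd, h1d⟩ := max_lt_iff.1 hd
    have hgt : 1 < value d x := by
      by_contra! hle
      exact (value_lt_one_of_lt h1d hdβ hle).ne hx
    filter_upwards [(hlim h1d).eventually_const_lt hgt] with n hn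
    by_contra! hγc
    exact hn.not_ge ((value_anti (hγ n) (hγc.trans hcd.le) _).trans_eq (hvalue n))
  · have hlt : value c x < 1 := value_lt_one_of_lt hβ hc hx.le
    filter_upwards [(hlim (hβ.trans hc)).eventually_lt_const hlt] with n hn
    by_contra! hγc
    exact hn.not_ge ((hvalue n).symm.trans_le (value_anti (hβ.trans hc) hγc _))

end Value

lemma one_le_value_tripling (x : ℕ → Bool) : 1 ≤ value (5 / 4) (tripling x) := by
  have hβ : (1 : ℝ) < 5 / 4 := by norm_num
  have hsplit (m : ℕ) : 5 / 4 * value (5 / 4) (shift m (tripling x)) =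
      ((tripling x m).toNat : ℝ) + value (5 / 4) (shift (m + 1) (tripling x)) := by
    rw [mul_value hβ, shift_shift, shift_apply, add_zero]
  have h2 : tripling x 2 = x 0 := tripling_three_mul_add_two x 0
  have h3 : tripling x 3 = !x 0 := tripling_three_mul_add_three x 0
  have hpair : ((tripling x 2).toNat : ℝ) + (tripling x 3).toNat = 1 := by
    rw [h2, h3]
    cases x 0 <;> simp
  have h0 : ((tripling x 0).toNat : ℝ) = 1 := by simp
  have h1 : (0 : ℝ) ≤ (tripling x 1).toNat := by positivity
  have htail := value_nonneg hβ (shift 4 (tripling x))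
  have hsplit0 := hsplit 0
  rw [shift_zero] at hsplit0
  linarith [hpair, h0, h1, htail, hsplit0, hsplit 1, hsplit 2, hsplit 3]

theorem exists_base_value_tripling_eq_one (x : ℕ → Bool) :
    ∃ β ∈ Ioc (1 : ℝ) 2, value β (tripling x) = 1 := by
  have hβ : (1 : ℝ) < 5 / 4 := by norm_num
  have hcont : ContinuousOn (fun β => value β (tripling x)) (Icc (5 / 4) 2) :=
    (continuousOn_value hβ _).mono Icc_subset_Ici_self
  have htwo : value 2 (tripling x) ≤ 1 := (value_le one_lt_two _).trans_eq (by norm_num)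
  obtain ⟨β, hmem, hvalue⟩ := intermediate_value_Icc' (by norm_num) hcont
    ⟨htwo, one_le_value_tripling x⟩
  exact ⟨β, ⟨hβ.trans_le hmem.1, hmem.2⟩, hvalue⟩

/-- The base in `(1, 2]` in which the periodic sequence `(t_{n+1})^∞` represents `1`. -/
def blockBase (n : ℕ) : ℝ := (exists_base_value_tripling_eq_one (morseSeq n)).choose

lemma blockBase_mem (n : ℕ) : blockBase n ∈ Ioc (1 : ℝ) 2 :=
  (exists_base_value_tripling_eq_one (morseSeq n)).choose_spec.1

lemma one_lt_blockBase (n : ℕ) : 1 < blockBase n := (blockBase_mem n).1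

lemma value_blockBase (n : ℕ) : value (blockBase n) (blockSeq n) = 1 :=
  (exists_base_value_tripling_eq_one (morseSeq n)).choose_spec.2

lemma exists_tripling_eq_true (x : ℕ → Bool) (m : ℕ) : ∃ i, shift m (tripling x) i = true := by
  cases hx : x m with
  | true => exact ⟨2 * m + 2, by simpa [show m + (2 * m + 2) = 3 * m + 2 by ring]⟩
  | false => exact ⟨2 * m + 3, by simp [show m + (2 * m + 3) = 3 * m + 3 by ring, hx]⟩

lemma value_blockSeq_lt_one {k n : ℕ} (hkn : k < n) : value (blockBase n) (blockSeq k) < 1 := by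
  have hlt : toLex (blockSeq k) < toLex (blockSeq n) := blockSeq_strictMono hkn
  refine value_lt_one (one_lt_blockBase n) (value_blockBase n) (fun m => ?_)
    (fun m => (properTailsLE_blockSeq k m).trans hlt.le) hlt
  obtain ⟨i, hi⟩ := exists_tripling_eq_true (morseSeq n) m
  exact value_pos (one_lt_blockBase n) hi

theorem blockBase_strictMono : StrictMono blockBase := by
  intro k n hkn
  by_contra! hle
  have := value_anti (one_lt_blockBase n) hle (blockSeq k)
  linarith [value_blockBase k, value_blockSeq_lt_one hkn]

lemma blockBase_lt_two (n : ℕ) : blockBase n < 2 :=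
  (blockBase_strictMono n.lt_succ_self).trans_le (blockBase_mem (n + 1)).2

/-! ### Univoque codings -/

/-- An enumeration of the digit set `Ω`. With this order the barycentric coordinates of the point
coded by a word are, up to scaling, the values of the letter sequences of its letters. -/
def digit : Fin 3 → ℝ × ℝ := ![(1, 0), (0, 1), (0, 0)]

/-- The point of `S_β` coded by the word `w`. -/
def codedPoint (β : ℝ) (w : ℕ → Fin 3) : ℝ × ℝ :=
  (value β (letterSeq w 0), value β (letterSeq w 1))

lemma digit_injective : Function.Injective digit := by
  intro i j h
  fin_cases i <;> fin_cases j <;> simp_all [digit]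

lemma range_digit : range digit = OmegaR := by
  ext p
  simp only [mem_range, Fin.exists_fin_succ, digit, OmegaR]
  simp [eq_comm (b := p)]
  tauto

lemma exists_eq_digit_comp {d : ℕ → ℝ × ℝ} (hd : ∀ i, d i ∈ OmegaR) :
    ∃ w : ℕ → Fin 3, d = digit ∘ w := by
  choose w hw using fun i => (range_digit ▸ hd i : d i ∈ range digit)
  exact ⟨w, funext fun i => (hw i).symm⟩

section Geometry

variable {β : ℝ}

lemma tsum_digit (hβ : 1 < β) (w : ℕ → Fin 3) :
    ∑' i, (β ^ (i + 1))⁻¹ • digit (w i) = codedPoint β w := by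
  have hterm (i : ℕ) : (β ^ (i + 1))⁻¹ • digit (w i) =
      (((letterSeq w 0 i).toNat : ℝ) / β ^ (i + 1),
        ((letterSeq w 1 i).toNat : ℝ) / β ^ (i + 1)) := by
    obtain h | h | h : w i = 0 ∨ w i = 1 ∨ w i = 2 := by omega
    all_goals simp [letterSeq, digit, h]
  simp only [hterm]
  exact ((hasSum_value hβ _).prodMk (hasSum_value hβ _)).tsum_eq

lemma sum_value_letterSeq (hβ : 1 < β) (w : ℕ → Fin 3) :
    ∑ j, value β (letterSeq w j) = 1 / (β - 1) := by
  have hsum := hasSum_sum fun j (_ : j ∈ Finset.univ) => hasSum_value hβ (letterSeq w j)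
  refine hsum.unique ?_
  convert hasSum_inv_pow_succ hβ using 2 with i
  rw [← Finset.sum_div]
  congr 1
  simp [letterSeq, Bool.toNat, Bool.cond_decide]

lemma codedPoint_mem_Sfat (hβ : 1 < β) (w : ℕ → Fin 3) : codedPoint β w ∈ Sfat β :=
  ⟨digit ∘ w, fun i => range_digit ▸ mem_range_self (w i), (tsum_digit hβ w).symm⟩

lemma inv_smul_digit_mem_Sfat (hβ : 1 < β) (j : Fin 3) : (1 / (β - 1)) • digit j ∈ Sfat β := by
  have hsum := ((hasSum_inv_pow_succ hβ).smul_const (digit j)).tsum_eq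
  simp only [one_div] at hsum
  rw [one_div, ← hsum, tsum_digit hβ fun _ => j]
  exact codedPoint_mem_Sfat hβ _

lemma Delta_eq (hβ : 1 < β) :
    Delta β = {p : ℝ × ℝ | 0 ≤ p.1 ∧ 0 ≤ p.2 ∧ p.1 + p.2 ≤ 1 / (β - 1)} := by
  have hpos : 0 < β - 1 := sub_pos.2 hβ
  apply Subset.antisymm
  · refine convexHull_min ?_ ?_
    · rintro _ ⟨d, hd, rfl⟩
      obtain ⟨w, rfl⟩ := exists_eq_digit_comp hd
      have hsum := sum_value_letterSeq hβ w
      rw [Fin.sum_univ_three] at hsum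
      have htwo := value_nonneg hβ (letterSeq w 2)
      simp only [Function.comp_apply, tsum_digit hβ]
      exact ⟨value_nonneg hβ _, value_nonneg hβ _, by simp only [codedPoint]; linarith⟩
    · rintro p ⟨hp1, hp2, hp⟩ q ⟨hq1, hq2, hq⟩ s t hs ht hst
      refine ⟨?_, ?_, ?_⟩ <;> simp only [Prod.fst_add, Prod.snd_add, Prod.smul_fst, Prod.smul_snd,
        smul_eq_mul]
      · positivity
      · positivity
      · calc s * p.1 + t * q.1 + (s * p.2 + t * q.2)
            = s * (p.1 + p.2) + t * (q.1 + q.2) := by ring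
          _ ≤ s * (1 / (β - 1)) + t * (1 / (β - 1)) := by gcongr
          _ = 1 / (β - 1) := by rw [← add_mul, hst, one_mul]
  · rintro p ⟨hp1, hp2, hp⟩
    rw [le_div_iff₀ hpos] at hp
    have hp_eq : p = ∑ j, ![(β - 1) * p.1, (β - 1) * p.2, 1 - (p.1 + p.2) * (β - 1)] j •
        ((1 / (β - 1)) • digit j) := by
      ext <;> simp [Fin.sum_univ_three, digit] <;> field_simp
    rw [hp_eq]
    refine (convex_convexHull ℝ _).sum_mem (fun j _ => ?_) ?_
      fun j _ => subset_convexHull ℝ _ (inv_smul_digit_mem_Sfat hβ j)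
    · fin_cases j
      · exact mul_nonneg hpos.le hp1
      · exact mul_nonneg hpos.le hp2
      · exact sub_nonneg.2 hp
    · simp [Fin.sum_univ_three]; ring

lemma mem_fmap_image_iff (hβ : β ≠ 0) (d p : ℝ × ℝ) (s : Set (ℝ × ℝ)) :
    p ∈ fmap β d '' s ↔ β • p - d ∈ s := by
  constructor
  · rintro ⟨q, hq, rfl⟩
    simpa [fmap, smul_smul, hβ]
  · exact fun h => ⟨_, h, by simp [fmap, smul_smul, hβ]⟩

lemma codedPoint_mem_image_iff (hβ : 1 < β) (w : ℕ → Fin 3) (j : Fin 3) :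
    codedPoint β w ∈ fmap β (digit j) '' Delta β ↔ 1 ≤ β * value β (letterSeq w j) := by
  have hpos : 0 < β - 1 := sub_pos.2 hβ
  have hsum := sum_value_letterSeq hβ w
  have hscaled : β * (1 / (β - 1)) = 1 + 1 / (β - 1) := by field_simp; ring
  have hnonneg (k : Fin 3) : 0 ≤ β * value β (letterSeq w k) :=
    mul_nonneg (by positivity) (value_nonneg hβ _)
  rw [Fin.sum_univ_three] at hsum
  rw [← hsum, mul_add, mul_add] at hscaled
  rw [mem_fmap_image_iff (by positivity), Delta_eq hβ]
  simp only [mem_ofPred_eq, codedPoint, Prod.fst_sub, Prod.snd_sub, Prod.smul_fst, Prod.smul_snd,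
    smul_eq_mul]
  have h0 := hnonneg 0
  have h1 := hnonneg 1
  have h2 := hnonneg 2
  obtain rfl | rfl | rfl : j = 0 ∨ j = 1 ∨ j = 2 := by omega
  all_goals
    simp only [digit, Matrix.cons_val]
    grind

lemma codedPoint_mem_Ofat_iff (hβ : 1 < β) (w : ℕ → Fin 3) :
    codedPoint β w ∈ Ofat β ↔ ∃ j ≠ w 0, 1 ≤ value β (shift 1 (letterSeq w j)) := by
  have hmem (j : Fin 3) : codedPoint β w ∈ fmap β (digit j) '' Delta β ↔
      j = w 0 ∨ 1 ≤ value β (shift 1 (letterSeq w j)) := by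
    rw [codedPoint_mem_image_iff hβ, mul_value hβ]
    obtain rfl | hj := eq_or_ne j (w 0)
    · simp [letterSeq, value_nonneg hβ]
    · simp [letterSeq, hj, hj.symm]
  have hOfat : codedPoint β w ∈ Ofat β ↔ ∃ j k, j ≠ k ∧
      codedPoint β w ∈ fmap β (digit j) '' Delta β ∧
      codedPoint β w ∈ fmap β (digit k) '' Delta β := by
    simp only [Ofat, ← range_digit, mem_iUnion, exists_prop, exists_range_iff, mem_inter_iff,
      digit_injective.ne_iff]
  simp only [hOfat, hmem]
  constructor
  · grind
  · rintro ⟨j, hj, hvalue⟩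
    exact ⟨w 0, j, hj.symm, .inl rfl, .inr hvalue⟩

theorem digit_comp_mem_Ufat_iff (hβ : 1 < β) (w : ℕ → Fin 3) :
    digit ∘ w ∈ Ufat β ↔
      ∀ m j, j ≠ w m → value β (shift (m + 1) (letterSeq w j)) < 1 := by
  have hdigit (i : ℕ) : (digit ∘ w) i ∈ OmegaR := range_digit ▸ mem_range_self (w i)
  have htail (m : ℕ) : ∑' i, (β ^ (i + 1))⁻¹ • (digit ∘ w) (m + i) = codedPoint β (shift m w) :=
    tsum_digit hβ (shift m w)
  simp only [Ufat, mem_ofPred_eq, hdigit, implies_true, true_and, htail,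
    codedPoint_mem_Ofat_iff hβ, not_exists, not_and, not_le, shift_apply, add_zero,
    ← shift_letterSeq, shift_shift]

end Geometry

/-! ### Rigidity of binary sequences -/

/-- The sequence `x` has period `p` from some index on. -/
def EventuallyPeriodic {α : Type*} (x : ℕ → α) (p : ℕ) : Prop := ∀ᶠ i in atTop, x (i + p) = x i

lemma eventuallyPeriodic_of_shift {α : Type*} {x : ℕ → α} {p : ℕ} (m : ℕ)
    (h : EventuallyPeriodic (shift m x) p) : EventuallyPeriodic x p := by
  obtain ⟨N, hN⟩ := eventually_atTop.1 h
  refine eventually_atTop.2 ⟨N + m, fun i hi => ?_⟩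
  have hshift := hN (i - m) (by omega)
  rwa [shift_apply, shift_apply, show m + (i - m + p) = i + p by omega,
    show m + (i - m) = i by omega] at hshift

lemma EventuallyPeriodic.of_dvd {α : Type*} {x : ℕ → α} {p q : ℕ} (h : EventuallyPeriodic x p)
    (hpq : p ∣ q) : EventuallyPeriodic x q := by
  obtain ⟨k, rfl⟩ := hpq
  obtain ⟨N, hN⟩ := eventually_atTop.1 h
  refine eventually_atTop.2 ⟨N, fun i hi => ?_⟩
  induction k with
  | zero => rfl
  | succ k ih => rw [mul_add_one, ← add_assoc, hN _ (by omega), ih]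

lemma EventuallyPeriodic.periodic {α : Type*} {x : ℕ → α} {p k : ℕ} (hk : 0 < k)
    (hper : ∀ i, x (i + k) = x i) (h : EventuallyPeriodic x p) (i : ℕ) : x (i + p) = x i := by
  obtain ⟨N, hN⟩ := eventually_atTop.1 h
  have hmul (j : ℕ) : x (j + N * k) = x j := Function.Periodic.nat_mul hper N j
  have hlarge : N ≤ i + N * k := le_add_left (Nat.le_mul_of_pos_right N hk)
  rw [← hmul, add_right_comm, hN _ hlarge, hmul]

lemma ne_of_change {α : Type*} {x : ℕ → α} {q : ℕ} (hq : x (q + 1) ≠ x q)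
    (hstep : ∀ i, x (i + 1) ≠ x i → x (i + 2) ≠ x (i + 1)) (i : ℕ) :
    x (q + i + 1) ≠ x (q + i) := by
  induction i with
  | zero => exact hq
  | succ i ih => exact hstep _ ih

/-- The tail of a binary sequence after index `q`, read relative to its digit at `q`: a digit of
`relTail v q` is `1` where `v` differs from `v q`. -/
def relTail (v : ℕ → Bool) (q : ℕ) : ℕ → Bool := fun i => v (q + 1 + i) ^^ v q

/-- All relative tails of `v` are lexicographically smaller than `a`. -/
def Balanced (a v : ℕ → Bool) : Prop := ∀ q, toLex (relTail v q) < toLex a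

section Balanced

variable {a v : ℕ → Bool}

lemma balanced_shift (h : Balanced a v) (m : ℕ) : Balanced a (shift m v) := by
  intro q
  have hrel : relTail (shift m v) q = relTail v (m + q) := by
    ext i; simp [relTail, add_assoc]
  rw [hrel]
  exact h (m + q)

lemma relTail_two_mul (hpair : ∀ k, v (2 * k + 1) ≠ v (2 * k)) (q : ℕ) :
    relTail v (2 * q) = doubling (relTail (fun k => v (2 * k + 1)) q) := by
  have hpair' (k : ℕ) : v (2 * k) = !v (2 * k + 1) := Bool.eq_not.2 (hpair k).symm
  refine eq_doubling ?_ (fun k => ?_) fun k => ?_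
  · simp [relTail, hpair' q]
  · simp [relTail, hpair' q, show 2 * q + 1 + (2 * k + 1) = 2 * (q + 1 + k) by ring, hpair']
  · simp [relTail, hpair' q, show 2 * q + 1 + (2 * k + 2) = 2 * (q + 1 + k) + 1 by ring]

lemma Balanced.renormalize (h : Balanced (doubling a) v)
    (hpair : ∀ k, v (2 * k + 1) ≠ v (2 * k)) : Balanced a fun k => v (2 * k + 1) := by
  intro q
  have hq := h (2 * q)
  rw [relTail_two_mul hpair] at hq
  exact doubling_strictMono.lt_iff_lt.1 hq

lemma not_balanced_morseSeq_zero : ¬ Balanced (morseSeq 0) v := by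
  intro h
  obtain ⟨p, -, -, hp⟩ := exists_first_diff (h 0)
  exact Bool.noConfusion hp

lemma Balanced.const (h : Balanced (morseSeq 1) v) (q : ℕ) : v (q + 1) = v q := by
  by_contra hq
  have hstep (i : ℕ) (hi : v (i + 1) ≠ v i) : v (i + 2) ≠ v (i + 1) := by
    have h0 : relTail v i 0 = true := by simpa [relTail] using hi
    have h1 : relTail v i 1 = false :=
      eq_false_of_toLex_lt (h i) (fun j hj => by rw [Nat.lt_one_iff.1 hj, h0]; rfl) rfl
    simp only [relTail, bne_eq_false_iff_eq] at h1
    rw [h1]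
    exact hi.symm
  exact not_balanced_morseSeq_zero
    ((balanced_shift h q).renormalize fun k => ne_of_change hq hstep (2 * k))

lemma prefix_of_lt_doubling_doubling {x b : ℕ → Bool}
    (h : toLex x < toLex (doubling (doubling b))) (h0 : x 0 = true) (h1 : x 1 = true) :
    x 2 = false ∧ (x 3 = true → x 4 = false ∧ x 5 = false) := by
  have h2 : x 2 = false :=
    eq_false_of_toLex_lt h (fun i hi => by interval_cases i <;> assumption) rfl
  refine ⟨h2, fun h3 => ?_⟩
  have hb : b 0 = true := by
    by_contra hb
    have h3' : x 3 = false := eq_false_of_toLex_lt h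
      (fun i hi => by interval_cases i <;> assumption) (by simpa using! hb)
    exact Bool.noConfusion (h3.symm.trans h3')
  have h4 : x 4 = false := eq_false_of_toLex_lt h
    (fun i hi => by interval_cases i <;> simp [*, doubling]) (by simp [doubling, hb])
  exact ⟨h4, eq_false_of_toLex_lt h
    (fun i hi => by interval_cases i <;> simp [*, doubling]) (by simp [doubling, hb])⟩

/-- A change of digit at `i` is followed by a repetition. -/
def IsTurn (v : ℕ → Bool) (i : ℕ) : Prop := v (i + 1) ≠ v i ∧ v (i + 2) = v (i + 1)

lemma IsTurn.next {b : ℕ → Bool} {i : ℕ} (hturn : IsTurn v i)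
    (h : Balanced (doubling (doubling b)) v) :
    v (i + 3) ≠ v (i + 2) ∧ (IsTurn v (i + 2) ∨ IsTurn v (i + 4)) := by
  have hprefix := prefix_of_lt_doubling_doubling (h i)
  simp only [relTail, IsTurn, add_assoc, Nat.reduceAdd] at hprefix hturn ⊢
  grind

lemma IsTurn.ne_of_even {b : ℕ → Bool} {i : ℕ} (hturn : IsTurn v i)
    (h : Balanced (doubling (doubling b)) v) (k : ℕ) : v (i + 2 * k + 1) ≠ v (i + 2 * k) := by
  induction k using Nat.strong_induction_on generalizing i with
  | _ k ih =>
    match k, ih with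
    | 0, _ => exact hturn.1
    | 1, _ => exact (hturn.next h).1
    | k + 2, ih =>
      obtain hnext | hnext := (hturn.next h).2
      · have := ih (k + 1) (by omega) hnext
        rwa [show i + 2 + 2 * (k + 1) = i + 2 * (k + 2) by ring] at this
      · have := ih k (by omega) hnext
        rwa [show i + 4 + 2 * k = i + 2 * (k + 2) by ring] at this

lemma eventuallyPeriodic_of_pairs {p : ℕ} (hpair : ∀ k, v (2 * k + 1) ≠ v (2 * k))
    (h : EventuallyPeriodic (fun k => v (2 * k + 1)) p) : EventuallyPeriodic v (2 * p) := by
  obtain ⟨N, hN⟩ := eventually_atTop.1 h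
  replace hN (k : ℕ) (hk : N ≤ k) : v (2 * (k + p) + 1) = v (2 * k + 1) := hN k hk
  refine eventually_atTop.2 ⟨2 * N, fun i hi => ?_⟩
  have hpair' (k : ℕ) : v (2 * k) = !v (2 * k + 1) := Bool.eq_not.2 (hpair k).symm
  obtain ⟨k, rfl | rfl⟩ := i.even_or_odd'
  · rw [show 2 * k + 2 * p = 2 * (k + p) by ring, hpair', hpair', hN k (by omega)]
  · rw [show 2 * k + 1 + 2 * p = 2 * (k + p) + 1 by ring, hN k (by omega)]

lemma eventuallyPeriodic_two_of_not_isTurn (hturn : ∀ i, ¬ IsTurn v i) :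
    EventuallyPeriodic v 2 := by
  have hstep (i : ℕ) (hi : v (i + 1) ≠ v i) : v (i + 2) ≠ v (i + 1) := fun h => hturn i ⟨hi, h⟩
  by_cases hchange : ∃ q, v (q + 1) ≠ v q
  · obtain ⟨q, hq⟩ := hchange
    refine eventuallyPeriodic_of_shift q (.of_forall fun i => ?_)
    have h1 : v (q + i) = !v (q + (i + 1)) := Bool.eq_not.2 (ne_of_change hq hstep i).symm
    have h2 : v (q + (i + 2)) = !v (q + (i + 1)) := Bool.eq_not.2 (ne_of_change hq hstep (i + 1))
    exact h2.trans h1.symm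
  · push Not at hchange
    exact .of_forall fun i => (hchange (i + 1)).trans (hchange i)

theorem Balanced.eventuallyPeriodic (n : ℕ) (h : Balanced (morseSeq (n + 1)) v) :
    EventuallyPeriodic v (2 ^ n) := by
  induction n generalizing v with
  | zero => exact .of_forall h.const
  | succ n ih =>
    by_cases hturn : ∃ i, IsTurn v i
    · obtain ⟨i, hturn⟩ := hturn
      have hpair (k : ℕ) : shift i v (2 * k + 1) ≠ shift i v (2 * k) := hturn.ne_of_even h k
      refine eventuallyPeriodic_of_shift i ?_
      rw [pow_succ']
      exact eventuallyPeriodic_of_pairs hpair (ih ((balanced_shift h i).renormalize hpair))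
    · push Not at hturn
      exact (eventuallyPeriodic_two_of_not_isTurn hturn).of_dvd (dvd_pow_self 2 n.succ_ne_zero)

end Balanced

/-! ### Rigidity of words over three letters -/

/-- Behind every letter of `w` different from `j`, the tail of the indicator sequence of `j` is
lexicographically smaller than `a`. For `a` representing `1` in base `β` this is the
combinatorial form of `w` coding a point of `Ufat β`. -/
def LexUnivoque (a : ℕ → Bool) (w : ℕ → Fin 3) : Prop :=
  ∀ m j, j ≠ w m → toLex (shift (m + 1) (letterSeq w j)) < toLex a

lemma prefix_of_lt_tripling_doubling {x b : ℕ → Bool}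
    (h : toLex x < toLex (tripling (doubling b))) (h0 : x 0 = true) :
    x 1 = false ∧ (x 2 = true → x 3 = false ∧ x 4 = false ∧
      (x 5 = true → x 6 = false ∧ x 7 = false ∧ x 8 = false)) := by
  have h1 : x 1 = false :=
    eq_false_of_toLex_lt h (fun i hi => by interval_cases i; exact h0) rfl
  refine ⟨h1, fun h2 => ?_⟩
  have h3 : x 3 = false :=
    eq_false_of_toLex_lt h (fun i hi => by interval_cases i <;> assumption) rfl
  have h4 : x 4 = false :=
    eq_false_of_toLex_lt h (fun i hi => by interval_cases i <;> assumption) rfl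
  refine ⟨h3, h4, fun h5 => ?_⟩
  have hb : b 0 = true := by
    by_contra hb
    have h5' : x 5 = false := eq_false_of_toLex_lt h
      (fun i hi => by interval_cases i <;> assumption) (by simpa using! hb)
    exact Bool.noConfusion (h5.symm.trans h5')
  have h6 : x 6 = false := eq_false_of_toLex_lt h
    (fun i hi => by interval_cases i <;> simp [*, tripling, doubling])
    (by simp [tripling, doubling, hb])
  have h7 : x 7 = false := eq_false_of_toLex_lt h
    (fun i hi => by interval_cases i <;> simp [*, tripling, doubling]) rfl
  exact ⟨h6, h7, eq_false_of_toLex_lt h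
    (fun i hi => by interval_cases i <;> simp [*, tripling, doubling])
    (by simp [tripling, doubling, hb])⟩

lemma eq_of_ne_of_ne {x y s t : Fin 3} (hst : s ≠ t) (hxs : x ≠ s) (hxt : x ≠ t)
    (hys : y ≠ s) (hyt : y ≠ t) : x = y := by
  omega

lemma decide_eq_eq_not_xor {x y c s : Fin 3} (hx : x ≠ c) (hy : y ≠ c) (hs : s ≠ c) :
    decide (x = y) = !(decide (x = s) ^^ decide (y = s)) := by
  decide +revert

/-- The letter of `w` at `i + 1` returns two places later. -/
def IsReturn (w : ℕ → Fin 3) (i : ℕ) : Prop := w (i + 3) = w (i + 1)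

section LexUnivoque

variable {a b : ℕ → Bool} {w : ℕ → Fin 3}

lemma lexUnivoque_shift (h : LexUnivoque a w) (m : ℕ) : LexUnivoque a (shift m w) := by
  intro k j hj
  rw [← shift_letterSeq, shift_shift]
  exact h (m + k) j hj

lemma LexUnivoque.letter_prefix (h : LexUnivoque (tripling (doubling b)) w) {m : ℕ} {j : Fin 3}
    (hm : w m ≠ j) (hm1 : w (m + 1) = j) :
    w (m + 2) ≠ j ∧ (w (m + 3) = j → w (m + 4) ≠ j ∧ w (m + 5) ≠ j ∧
      (w (m + 6) = j → w (m + 7) ≠ j ∧ w (m + 8) ≠ j ∧ w (m + 9) ≠ j)) := by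
  simpa [letterSeq, add_assoc] using
    prefix_of_lt_tripling_doubling (h m j hm.symm) (by simpa [letterSeq] using hm1)

lemma LexUnivoque.return_next (h : LexUnivoque (tripling (doubling b)) w)
    (hadj : ∀ i, w (i + 1) ≠ w i) {i : ℕ} (hi : IsReturn w i) :
    w (i + 5) = w (i + 2) ∧
      (IsReturn w (i + 3) ∨ w (i + 8) = w (i + 2) ∧ IsReturn w (i + 6)) := by
  have h12 : w (i + 1) ≠ w (i + 2) := (hadj (i + 1)).symm
  obtain ⟨h41, h51, hlong⟩ := (h.letter_prefix (hadj i).symm rfl).2 hi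
  have hclash {s t : Fin 3} {k : ℕ} (hst : s ≠ t) (hs : w k ≠ s) (ht : w k ≠ t)
      (hs' : w (k + 1) ≠ s) (ht' : w (k + 1) ≠ t) : False :=
    hadj k (eq_of_ne_of_ne hst hs' ht' hs ht)
  have h42 : w (i + 4) ≠ w (i + 2) := by
    intro h42
    obtain ⟨h52, h62, hlong'⟩ := (h.letter_prefix h12 rfl).2 h42
    have h61 : w (i + 6) = w (i + 1) :=
      eq_of_ne_of_ne h52.symm h62 (hadj (i + 5)) h12 h51.symm
    obtain ⟨h71, h81, h91⟩ := hlong h61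
    by_cases h72 : w (i + 7) = w (i + 2)
    · obtain ⟨h82, h92, -⟩ := hlong' h72
      exact hclash h12 h81 h82 h91 h92
    · have h75 : w (i + 7) = w (i + 5) := eq_of_ne_of_ne h12 h71 h72 h51 h52
      obtain ⟨h85, h95, -⟩ := (h.letter_prefix (hadj (i + 4)).symm rfl).2 h75
      exact hclash h51.symm h81 h85 h91 h95
  have h52 : w (i + 5) = w (i + 2) :=
    eq_of_ne_of_ne h41.symm h51 (hadj (i + 4)) h12.symm h42.symm
  refine ⟨h52, or_iff_not_imp_left.2 fun h64 => ?_⟩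
  have h61 : w (i + 6) = w (i + 1) :=
    eq_of_ne_of_ne (hadj (i + 4)) (hadj (i + 5)) h64 (h52 ▸ h12) h41.symm
  obtain ⟨h71, h81, h91⟩ := hlong h61
  have h75 : w (i + 7) ≠ w (i + 5) := by
    intro h75
    obtain ⟨h85, h95, -⟩ := (h.letter_prefix (hadj (i + 4)).symm rfl).2 h75
    exact hclash h51.symm h81 h85 h91 h95
  have h82 : w (i + 8) = w (i + 2) :=
    eq_of_ne_of_ne h71.symm h81 (hadj (i + 7)) h12.symm (h52 ▸ h75.symm)
  exact ⟨h82, eq_of_ne_of_ne h12 h91 (h82 ▸ hadj (i + 8)) h71 (h52 ▸ h75)⟩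

lemma LexUnivoque.eq_of_isReturn (h : LexUnivoque (tripling (doubling b)) w)
    (hadj : ∀ i, w (i + 1) ≠ w i) {i : ℕ} (hi : IsReturn w i) (k : ℕ) :
    w (i + 2 + 3 * k) = w (i + 2) := by
  induction k using Nat.strong_induction_on generalizing i with
  | _ k ih =>
    obtain ⟨h5, hnext⟩ := h.return_next hadj hi
    match k, ih with
    | 0, _ => rfl
    | 1, _ => exact h5
    | k + 2, ih =>
      obtain hi3 | ⟨h8, hi6⟩ := hnext
      · have := ih (k + 1) (by omega) hi3
        rwa [h5, show i + 3 + 2 + 3 * (k + 1) = i + 2 + 3 * (k + 2) by ring] at this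
      · have := ih k (by omega) hi6
        rwa [h8, show i + 6 + 2 + 3 * k = i + 2 + 3 * (k + 2) by ring] at this

lemma shift_letterSeq_eq_tripling (hadj : ∀ i, w (i + 1) ≠ w i) (h0 : ∀ k, w (3 * k) = w 0)
    (q : ℕ) : shift (3 * q + 2) (letterSeq w (w (3 * q + 2))) =
      tripling (relTail (fun k => decide (w (3 * k + 2) = w 1)) q) := by
  have hne1 (k : ℕ) : w (3 * k + 1) ≠ w 0 := h0 k ▸ hadj (3 * k)
  have hne2 (k : ℕ) : w (3 * k + 2) ≠ w 0 := h0 (k + 1) ▸ (hadj (3 * k + 2)).symm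
  have hone (k : ℕ) : w (3 * k + 2) = w (3 * q + 2) ↔ w (3 * k + 1) ≠ w (3 * q + 2) :=
    ⟨fun h => h ▸ (hadj (3 * k + 1)).symm,
      fun h => eq_of_ne_of_ne (hne1 k) (hadj (3 * k + 1)) (hne2 k) h.symm (hne2 q)⟩
  have htwo (k : ℕ) := decide_eq_eq_not_xor (hne2 k) (hne2 q) (hne1 0)
  refine eq_tripling ?_ (fun k => ?_) (fun k => ?_) fun k => ?_
  · simp [letterSeq]
  · simp only [shift_apply, letterSeq, decide_eq_false_iff_not]
    rw [show 3 * q + 2 + (3 * k + 1) = 3 * (q + k + 1) by ring, h0]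
    exact (hne2 q).symm
  · simp only [shift_apply, letterSeq, relTail]
    rw [show 3 * q + 2 + (3 * k + 2) = 3 * (q + 1 + k) + 1 by ring, ← Bool.not_inj_iff, ← htwo,
      ← decide_not, decide_eq_decide]
    exact (hone _).symm
  · simp only [shift_apply, letterSeq, relTail]
    rw [show 3 * q + 2 + (3 * k + 3) = 3 * (q + 1 + k) + 2 by ring]
    exact htwo _

lemma LexUnivoque.balanced (h : LexUnivoque (tripling a) w) (hadj : ∀ i, w (i + 1) ≠ w i)
    (h0 : ∀ k, w (3 * k) = w 0) : Balanced a fun k => decide (w (3 * k + 2) = w 1) := by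
  intro q
  have hq := h (3 * q + 1) (w (3 * q + 2)) (hadj (3 * q + 1))
  rw [shift_letterSeq_eq_tripling hadj h0] at hq
  exact tripling_strictMono.lt_iff_lt.1 hq

lemma eventuallyPeriodic_of_triples {p : ℕ} (hadj : ∀ i, w (i + 1) ≠ w i)
    (h0 : ∀ k, w (3 * k) = w 0)
    (h : EventuallyPeriodic (fun k => decide (w (3 * k + 2) = w 1)) p) :
    EventuallyPeriodic w (3 * p) := by
  obtain ⟨N, hN⟩ := eventually_atTop.1 h
  have hne1 (k : ℕ) : w (3 * k + 1) ≠ w 0 := h0 k ▸ hadj (3 * k)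
  have hne2 (k : ℕ) : w (3 * k + 2) ≠ w 0 := h0 (k + 1) ▸ (hadj (3 * k + 2)).symm
  have htwo (k : ℕ) (hk : N ≤ k) : w (3 * (k + p) + 2) = w (3 * k + 2) := by
    have hdec := decide_eq_eq_not_xor (hne2 (k + p)) (hne2 k) (hne1 0)
    have hk' : decide (w (3 * (k + p) + 2) = w 1) = decide (w (3 * k + 2) = w 1) := hN k hk
    rw [hk', Bool.xor_self] at hdec
    exact of_decide_eq_true hdec
  refine eventually_atTop.2 ⟨3 * N, fun i hi => ?_⟩
  obtain ⟨k, hk, rfl | rfl | rfl⟩ : ∃ k, N ≤ k ∧ (i = 3 * k ∨ i = 3 * k + 1 ∨ i = 3 * k + 2) :=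
    ⟨i / 3, by omega, by omega⟩
  · rw [← mul_add, h0, h0]
  · rw [show 3 * k + 1 + 3 * p = 3 * (k + p) + 1 by ring]
    exact eq_of_ne_of_ne (hne2 k) (htwo k hk ▸ (hadj (3 * (k + p) + 1)).symm) (hne1 _)
      (hadj (3 * k + 1)).symm (hne1 k)
  · rw [show 3 * k + 2 + 3 * p = 3 * (k + p) + 2 by ring, htwo k hk]

lemma eventuallyPeriodic_three_of_not_isReturn (hadj : ∀ i, w (i + 1) ≠ w i)
    (hreturn : ∀ i, ¬ IsReturn w i) : EventuallyPeriodic w 3 := by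
  refine eventuallyPeriodic_of_shift 1 (.of_forall fun i => ?_)
  simp only [shift_apply, add_comm 1]
  exact eq_of_ne_of_ne (hadj (i + 2)) (hadj (i + 3)) (hreturn (i + 1))
    (Ne.symm (hreturn i)) (hadj (i + 1)).symm

theorem LexUnivoque.eventuallyPeriodic {n : ℕ} (h : LexUnivoque (blockSeq (n + 1)) w) :
    EventuallyPeriodic w (3 * 2 ^ n) := by
  by_cases hchange : ∃ q, w (q + 1) ≠ w q
  · obtain ⟨q, hq⟩ := hchange
    refine eventuallyPeriodic_of_shift q ?_
    have hadj (i : ℕ) : shift q w (i + 1) ≠ shift q w i :=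
      ne_of_change hq (fun i hi => (h.letter_prefix hi.symm rfl).1) i
    by_cases hreturn : ∃ i, IsReturn (shift q w) i
    · obtain ⟨i, hi⟩ := hreturn
      have hthird := (lexUnivoque_shift h q).eq_of_isReturn hadj hi
      have hadj' (k : ℕ) : shift (i + 2) (shift q w) (k + 1) ≠ shift (i + 2) (shift q w) k :=
        hadj (i + 2 + k)
      exact eventuallyPeriodic_of_shift (i + 2) (eventuallyPeriodic_of_triples hadj' hthird
        ((lexUnivoque_shift (lexUnivoque_shift h q) (i + 2)).balanced hadj' hthird
          |>.eventuallyPeriodic n))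
    · push Not at hreturn
      exact (eventuallyPeriodic_three_of_not_isReturn hadj hreturn).of_dvd (dvd_mul_right 3 _)
  · push Not at hchange
    have hone : EventuallyPeriodic w 1 := .of_forall hchange
    exact hone.of_dvd (one_dvd _)

end LexUnivoque

/-! ### Critical bases -/

lemma smallestPeriod_comp_iff {α γ : Type*} {f : α → γ} (hf : Function.Injective f) {w : ℕ → α}
    {k : ℕ} : SmallestPeriod (f ∘ w) k ↔ SmallestPeriod w k := by
  simp only [SmallestPeriod, Function.comp_apply, hf.eq_iff, hf.ne_iff]

lemma digit_comp_univoqueWord_mem_Ufat {n : ℕ} {β : ℝ} (hβ : blockBase n < β) :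
    digit ∘ univoqueWord n ∈ Ufat β :=
  (digit_comp_mem_Ufat_iff ((one_lt_blockBase n).trans hβ) _).2 fun m j _ =>
    value_lt_one_of_lt (one_lt_blockBase n) hβ <|
      value_shift_succ_le_one (one_lt_blockBase n) (value_blockBase n)
        (properTailsLE_letterSeq_univoqueWord n j) m

lemma smallestPeriod_digit_comp_univoqueWord (n : ℕ) :
    SmallestPeriod (digit ∘ univoqueWord n) (3 * 2 ^ n) :=
  (smallestPeriod_comp_iff digit_injective).2 (smallestPeriod_univoqueWord n)

theorem betaK_le_blockBase (n : ℕ) : betaK (3 * 2 ^ n) ≤ blockBase n := by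
  refine le_of_forall_gt_imp_ge_of_dense fun β hβ => ?_
  have hmem : min β 2 ∈ {β : ℝ | β ∈ Ioc (1 : ℝ) 2 ∧
      ∃ d ∈ Ufat β, SmallestPeriod d (3 * 2 ^ n)} := by
    have hlt : blockBase n < min β 2 := lt_min hβ (blockBase_lt_two n)
    exact ⟨⟨(one_lt_blockBase n).trans hlt, min_le_right _ _⟩, _,
      digit_comp_univoqueWord_mem_Ufat hlt, smallestPeriod_digit_comp_univoqueWord n⟩
  exact (csInf_le ⟨1, fun γ hγ => hγ.1.1.le⟩ hmem).trans (min_le_left _ _)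

lemma lexUnivoque_of_mem_Ufat {n : ℕ} {β : ℝ} {w : ℕ → Fin 3} (hβ : 1 < β)
    (hle : β ≤ blockBase n) (hw : digit ∘ w ∈ Ufat β) : LexUnivoque (blockSeq n) w := by
  intro m j hj
  by_contra hlex
  have hge : 1 ≤ value (blockBase n) (shift (m + 1) (letterSeq w j)) :=
    one_le_value (one_lt_blockBase n) (value_blockBase n) (properTailsLE_blockSeq n)
      (not_lt.1 hlex)
  have hlt := (digit_comp_mem_Ufat_iff hβ w).1 hw m j hj
  exact ((value_anti hβ hle _).trans_lt hlt).not_ge hge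

theorem blockBase_succ_le_betaK (n : ℕ) : blockBase (n + 1) ≤ betaK (3 * 2 ^ (n + 1)) := by
  refine le_csInf ⟨2, ⟨one_lt_two, le_rfl⟩, _,
    digit_comp_univoqueWord_mem_Ufat (blockBase_lt_two (n + 1)),
    smallestPeriod_digit_comp_univoqueWord (n + 1)⟩ ?_
  rintro β ⟨⟨hβ, -⟩, d, hd, hperiod⟩
  by_contra! hlt
  obtain ⟨w, rfl⟩ := exists_eq_digit_comp hd.1
  obtain ⟨hpos, hper, hmin⟩ := (smallestPeriod_comp_iff digit_injective).1 hperiod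
  have hlt_period : 3 * 2 ^ n < 3 * 2 ^ (n + 1) := by gcongr <;> omega
  obtain ⟨i, hi⟩ := hmin (3 * 2 ^ n) (by positivity) hlt_period
  have heventually := (lexUnivoque_of_mem_Ufat hβ hlt.le hd).eventuallyPeriodic
  exact hi (heventually.periodic hpos hper i)

theorem betaK_eq_blockBase (n : ℕ) : betaK (3 * 2 ^ (n + 1)) = blockBase (n + 1) :=
  (betaK_le_blockBase (n + 1)).antisymm (blockBase_succ_le_betaK n)

/-- The common limit of the sequences `blockSeq n`: the sequence `lamSeq` with Boolean digits. -/
def limitSeq (i : ℕ) : Bool := blockSeq (i + 1) i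

lemma plusBlock_eq_map {w : List ℕ} {x y : ℕ → Bool} {N : ℕ} (hN : 0 < N)
    (hw : w = (List.range N).map fun i => (x i).toNat) (hxy : ∀ i < N - 1, y i = x i)
    (hlast : y (N - 1) = true) : plusBlock w = (List.range N).map fun i => (y i).toNat := by
  obtain ⟨N, rfl⟩ := Nat.exists_eq_succ_of_ne_zero hN.ne'
  simp only [Nat.succ_eq_add_one, add_tsub_cancel_right] at hxy hlast
  rw [hw, plusBlock, List.range_succ, List.map_append, List.map_append]
  simp only [List.map_cons, List.map_nil, List.dropLast_concat, hlast, Bool.toNat_true]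
  congr 1
  exact List.map_congr_left fun i hi => by rw [hxy i (List.mem_range.1 hi)]

lemma tB_eq_map (n : ℕ) :
    tB n = (List.range (3 * 2 ^ n)).map fun i => (blockSeq n i).toNat := by
  induction n with
  | zero => rfl
  | succ n ih =>
    have hplus : plusBlock (tB n) =
        (List.range (3 * 2 ^ n)).map fun i => (blockSeq (n + 1) i).toNat :=
      plusBlock_eq_map (by positivity) ih (blockSeq_succ_apply_of_lt n) (blockSeq_succ_last n)
    have htheta : thetaBlock (plusBlock (tB n)) = (List.range (3 * 2 ^ n)).map fun i =>
        (blockSeq (n + 1) (3 * 2 ^ n + i)).toNat := by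
      rw [hplus]
      refine List.ext_getElem (by simp [thetaBlock]) fun i _ _ => ?_
      simp only [thetaBlock, List.getElem_mapIdx, List.getElem_map, List.getElem_range,
        add_comm (3 * 2 ^ n), blockSeq_succ_add]
      split_ifs
      · rfl
      · cases blockSeq (n + 1) i <;> rfl
    rw [tB, htheta, hplus, show 3 * 2 ^ (n + 1) = 3 * 2 ^ n + 3 * 2 ^ n by ring, List.range_add,
      List.map_append, List.map_map]
    rfl

lemma lt_three_mul_two_pow_sub_one (i : ℕ) : i + 1 < 3 * 2 ^ (i + 1) - 1 := by
  have := Nat.lt_two_pow_self (n := i + 1)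
  omega

lemma lamSeq_eq_toNat_limitSeq (i : ℕ) : lamSeq i = (limitSeq i).toNat := by
  have hi := lt_three_mul_two_pow_sub_one i
  rw [lamSeq, tB_eq_map, List.getD_eq_getElem _ _ (by simp; omega), List.getElem_map,
    List.getElem_range, limitSeq]

lemma blockSeq_eq_limitSeq {i n : ℕ} (hn : i + 1 ≤ n) : blockSeq n i = limitSeq i := by
  induction n, hn using Nat.le_induction with
  | base => rfl
  | succ n hn ih =>
    rw [blockSeq_succ_apply_of_lt n i, ih]
    have : 2 ^ (i + 1) ≤ 2 ^ n := by gcongr; exact one_le_two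
    have := lt_three_mul_two_pow_sub_one i
    omega

lemma tendsto_blockSeq : Tendsto blockSeq atTop (nhds limitSeq) :=
  tendsto_pi_nhds.2 fun i => tendsto_const_nhds.congr' <| by
    filter_upwards [eventually_ge_atTop (i + 1)] with n hn
    exact (blockSeq_eq_limitSeq hn).symm

lemma value_limitSeq {β : ℝ} (hβ : SumsToOne β lamSeq) : value β limitSeq = 1 := by
  simpa only [SumsToOne, lamSeq_eq_toNat_limitSeq] using! hβ

theorem tendsto_blockBase {β : ℝ} (hβ : IsBetaC β) : Tendsto blockBase atTop (nhds β) :=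
  tendsto_base_of_value_eq_one one_lt_blockBase hβ.1.1 tendsto_blockSeq value_blockBase
    (value_limitSeq hβ.2)

/-- The sequence n ↦ β_{3·2ⁿ} is strictly increasing and converges to β_c. -/
theorem stmt10 (bc : ℝ) (hbc : FatSierpinski.IsBetaC bc) :
    StrictMono (fun n : ℕ => FatSierpinski.betaK (3 * 2 ^ n)) ∧
    Filter.Tendsto (fun n : ℕ => FatSierpinski.betaK (3 * 2 ^ n))
      Filter.atTop (nhds bc) := by
  constructor
  · refine strictMono_nat_of_lt_succ fun n => ?_
    calc
      betaK (3 * 2 ^ n) ≤ blockBase n := betaK_le_blockBase n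
      _ < blockBase (n + 1) := blockBase_strictMono n.lt_succ_self
      _ = betaK (3 * 2 ^ (n + 1)) := (betaK_eq_blockBase n).symm
  · rw [← tendsto_add_atTop_iff_nat 1]
    simpa only [betaK_eq_blockBase] using (tendsto_add_atTop_iff_nat 1).2 (tendsto_blockBase hbc)

end FatSierpinski
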